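/- arXiv:1506.03205 — 5 statements merged into one kernel-verified Lean document; each statement's English description precedes it below -/
import Mathlib

section
/- Let (X,d) be a compact metric space and 𝓜 = {d_λ}_{λ∈Λ} an increasing family of distances on X. Assume: (1) there exist positive constants A and m such that for every sufficiently small ε > 0, X admits a covering by closed d-balls of radius ε of cardinality at most A·ε^{-m}; and (2) there are constants a, b ≥ 0 with d_λ(x,y) ≤ e^{aλ+b}·d(x,y) for all λ ∈ Λ and all x,y ∈ X. Then h(𝓜,X) ≤ m·a. -/
open Filter Topology
open scoped ENNReal NNReal

variable {X : Type*}

/-- `ρ` is a metric on `X`. -/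
def IsMetric (ρ : X → X → ℝ) : Prop :=
  (∀ x y, ρ x y = 0 ↔ x = y) ∧ (∀ x y, ρ x y = ρ y x) ∧ ∀ x y z, ρ x z ≤ ρ x y + ρ y z

/-- `M(ρ,ε)`: the minimal number of closed `ρ`-balls of radius `ε` needed to cover `X`. -/
noncomputable def coverNum (ρ : X → X → ℝ) (ε : ℝ) : ℕ∞ :=
  sInf {n : ℕ∞ | ∃ s : Finset X, (s.card : ℕ∞) = n ∧ ∀ x : X, ∃ c ∈ s, ρ c x ≤ ε}

/-- extended logarithm on `ℕ∞`, with values in `[0,∞]`. -/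
noncomputable def elog (n : ℕ∞) : ℝ≥0∞ :=
  if n = ⊤ then ⊤ else ENNReal.ofReal (Real.log (n.toNat : ℝ))

/-- entropy of a family of distances: `sup_{ε>0} limsup_{λ→∞} (1/λ) log M(d_λ,ε)`. -/
noncomputable def entropy (d : ℝ≥0 → X → X → ℝ) : ℝ≥0∞ :=
  ⨆ (ε : ℝ) (_ : 0 < ε),
    Filter.limsup (fun r : ℝ≥0 => elog (coverNum (d r) ε) / (r : ℝ≥0∞)) Filter.atTop

/-- an increasing family of distances: each `d_λ` is a metric and `d_λ ≤ d_λ'` for `λ ≤ λ'`. -/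
def IsIncreasingFamily (d : ℝ≥0 → X → X → ℝ) : Prop :=
  (∀ r, IsMetric (d r)) ∧ ∀ ⦃r s : ℝ≥0⦄, r ≤ s → ∀ x y, d r x y ≤ d s x y

/-- Finiteness criterion: if `X` can be covered by at most `A·ε^{-m}` closed `d`-balls of
radius `ε` for every small `ε > 0`, and `d_λ ≤ e^{aλ+b}·d`, then `h(𝓜,X) ≤ m·a`. -/
theorem entropy_le_of_polynomial_cover [MetricSpace X] [CompactSpace X]
    (d : ℝ≥0 → X → X → ℝ) (hd0 : ∀ x y, d 0 x y = dist x y)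
    (hd : IsIncreasingFamily d)
    (A m : ℝ) (hA : 0 < A) (hm : 0 < m)
    (hcov : ∃ ε₀ > (0 : ℝ), ∀ ε : ℝ, 0 < ε → ε < ε₀ →
      ∃ s : Finset X, (s.card : ℝ) ≤ A * ε ^ (-m) ∧ ∀ x : X, ∃ c ∈ s, dist c x ≤ ε)
    (a b : ℝ) (ha : 0 ≤ a) (hb : 0 ≤ b)
    (hgrow : ∀ (r : ℝ≥0) (x y : X), d r x y ≤ Real.exp (a * r + b) * dist x y) :
    entropy d ≤ ENNReal.ofReal (m * a) := by
  obtain ⟨ε₀, hε₀, hcov⟩ := hcov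
  unfold entropy
  refine iSup₂_le fun ε hε => ?_
  set η : ℝ := min ε (ε₀ / 2) with hη
  have hη0 : 0 < η := lt_min hε (by positivity)
  set C : ℝ := |Real.log A - m * Real.log η + m * b| with hC
  have key : ∀ r : ℝ≥0, elog (coverNum (d r) ε) ≤ ENNReal.ofReal (C + m * a * r) := by
    intro r
    have har : 0 ≤ a * (r : ℝ) + b := by positivity
    have hδ0 : 0 < η * Real.exp (-(a * r + b)) := by positivity
    have hδ1 : η * Real.exp (-(a * r + b)) < ε₀ := by
      have h1 : Real.exp (-(a * r + b)) ≤ 1 := Real.exp_le_one_iff.2 (by linarith)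
      have h2 : η ≤ ε₀ / 2 := min_le_right _ _
      nlinarith
    obtain ⟨s, hs, hsc⟩ := hcov _ hδ0 hδ1
    have hle : coverNum (d r) ε ≤ (s.card : ℕ∞) := by
      refine sInf_le ⟨s, rfl, fun x => ?_⟩
      obtain ⟨c, hc, hcx⟩ := hsc x
      refine ⟨c, hc, (hgrow r c x).trans ?_⟩
      calc Real.exp (a * r + b) * dist c x
          ≤ Real.exp (a * r + b) * (η * Real.exp (-(a * r + b))) := by gcongr
        _ = η * (Real.exp (a * r + b) * Real.exp (-(a * r + b))) := by ring
        _ = η := by rw [← Real.exp_add]; simp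
        _ ≤ ε := min_le_left _ _
    have hne : coverNum (d r) ε ≠ ⊤ := ne_top_of_le_ne_top (ENat.coe_ne_top _) hle
    have hnat : (coverNum (d r) ε).toNat ≤ s.card := by
      have := ENat.toNat_le_toNat hle (ENat.coe_ne_top _)
      simpa using this
    unfold elog
    rw [if_neg hne]
    refine ENNReal.ofReal_le_ofReal ?_
    have hmar : 0 ≤ m * a * (r : ℝ) := by positivity
    rcases Nat.eq_zero_or_pos (coverNum (d r) ε).toNat with h0 | h0
    · rw [h0]
      simp only [Nat.cast_zero, Real.log_zero]
      have : 0 ≤ C := abs_nonneg _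
      linarith
    · have h1 : (((coverNum (d r) ε).toNat : ℕ) : ℝ) ≤
          A * (η * Real.exp (-(a * r + b))) ^ (-m) := le_trans (by exact_mod_cast hnat) hs
      have h2 := Real.log_le_log (by exact_mod_cast h0) h1
      rw [Real.log_mul hA.ne' (by positivity), Real.log_rpow hδ0,
        Real.log_mul hη0.ne' (by positivity), Real.log_exp] at h2
      have h3 : Real.log A - m * Real.log η + m * b ≤ C := le_abs_self _
      nlinarith
  have hlim : Tendsto (fun r : ℝ≥0 => ENNReal.ofReal (C / (r : ℝ) + m * a)) atTop
      (𝓝 (ENNReal.ofReal (m * a))) := by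
    refine ENNReal.tendsto_ofReal ?_
    have h := (tendsto_const_nhds (x := C)).div_atTop
      (NNReal.tendsto_coe_atTop.2 (tendsto_id (α := ℝ≥0)))
    simpa using h.add_const (m * a)
  rw [← hlim.limsup_eq]
  refine limsup_le_limsup ?_
  filter_upwards [eventually_gt_atTop 0] with r hr
  have hr' : (0 : ℝ) < r := hr
  refine (ENNReal.div_le_div_right (key r) _).trans (le_of_eq ?_)
  rw [← ENNReal.ofReal_coe_nnreal, ← ENNReal.ofReal_div_of_pos hr']
  congr 1
  field_simp
end

section
/- Let (X,d) be a compact metric space and {𝒜_r}_{r∈[0,∞)} a filtered family of admissible curves on X. Suppose there is a metric ρ on X such that (X,ρ) is totally bounded and such that for every r > 0, every x,y ∈ X, every γ ∈ 𝒜_r(x), and every ε > 0, there exists μ ∈ 𝒜_r(y) with d̄(γ,μ) ≤ ρ(x,y) + ε. Then δ_r(x,y) ≤ ρ(x,y) and d_r(x,y) ≤ 2·ρ(x,y) for all r > 0 and all x,y ∈ X, and consequently the entropy h({d_r}_{r∈[0,∞)}, X) of the associated family of distances is zero. (This is the abstract content of the theorem that a controllable smooth distribution on a compact Finsler manifold has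 zero Finsler entropy, where ρ is the distance of minimal length of admissible curves joining two points.) -/
open Filter Topology unitInterval
open scoped ENNReal NNReal

variable {X : Type*}

/-- the curve `t ↦ γ(c·t)` obtained from `γ` by rescaling the parameter by `c ∈ [0,1]`. -/
def rescaleCurve [TopologicalSpace X] (c : unitInterval) (γ : C(unitInterval, X)) :
    C(unitInterval, X) :=
  γ.comp ⟨fun t => c * t,
    Continuous.subtype_mk (continuous_const.mul continuous_subtype_val) _⟩

/-- A filtered family of admissible curves on `X`: `𝒜 0` is the set of constant curves,
every `𝒜 r` contains the constant curves, the family is monotone in `r`, and for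
`0 < s < r` every curve of `𝒜 r` can be rescaled into a curve of `𝒜 s`. -/
structure IsAdmissibleFiltration [TopologicalSpace X]
    (𝒜 : ℝ≥0 → Set C(unitInterval, X)) : Prop where
  zero_eq : 𝒜 0 = {γ | ∃ x : X, γ = ContinuousMap.const unitInterval x}
  const_mem : ∀ (r : ℝ≥0) (x : X), ContinuousMap.const unitInterval x ∈ 𝒜 r
  mono : ∀ ⦃s r : ℝ≥0⦄, s ≤ r → 𝒜 s ⊆ 𝒜 r
  rescale : ∀ ⦃s r : ℝ≥0⦄, 0 < s → s < r → ∀ γ ∈ 𝒜 r,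
    ∃ c : unitInterval, rescaleCurve c γ ∈ 𝒜 s

/-- `𝒜_r(x)`: the curves of `𝒜 r` starting at `x`. -/
def curveSet [TopologicalSpace X] (𝒜 : ℝ≥0 → Set C(unitInterval, X)) (r : ℝ≥0) (x : X) :
    Set C(unitInterval, X) :=
  {γ | γ ∈ 𝒜 r ∧ γ 0 = x}

/-- `δ_r(x,y) = sup_{γ ∈ 𝒜_r(x)} inf_{μ ∈ 𝒜_r(y)} d̄(γ,μ)`, where `d̄` is the uniform
distance on `C([0,1],X)` (which is the distance of the metric space `C([0,1],X)`). -/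
noncomputable def deltaR [MetricSpace X] (𝒜 : ℝ≥0 → Set C(unitInterval, X)) (r : ℝ≥0)
    (x y : X) : ℝ :=
  ⨆ γ : curveSet 𝒜 r x, ⨅ μ : curveSet 𝒜 r y, dist (γ : C(unitInterval, X)) μ

/-- `d_r(x,y) = δ_r(x,y) + δ_r(y,x)`. -/
noncomputable def dR [MetricSpace X] (𝒜 : ℝ≥0 → Set C(unitInterval, X)) (r : ℝ≥0)
    (x y : X) : ℝ :=
  deltaR 𝒜 r x y + deltaR 𝒜 r y x

/-- If there is a totally bounded metric `ρ` on `X` such that any curve of `𝒜_r(x)` can be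
`ε`-approximated by a curve of `𝒜_r(y)` up to `ρ(x,y)`, then `δ_r ≤ ρ`, `d_r ≤ 2ρ`, and the
entropy of the family `{d_r}` is zero.  (Abstract form of: a controllable distribution on a
compact Finsler manifold has zero Finsler entropy.) -/
theorem entropy_eq_zero_of_controllable [MetricSpace X] [CompactSpace X]
    (𝒜 : ℝ≥0 → Set C(unitInterval, X)) (h𝒜 : IsAdmissibleFiltration 𝒜)
    (ρ : X → X → ℝ) (hρ : IsMetric ρ)
    (htb : ∀ ε : ℝ, 0 < ε → ∃ s : Finset X, ∀ x : X, ∃ c ∈ s, ρ c x ≤ ε)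
    (happrox : ∀ r : ℝ≥0, 0 < r → ∀ x y : X, ∀ γ ∈ curveSet 𝒜 r x, ∀ ε : ℝ, 0 < ε →
      ∃ μ ∈ curveSet 𝒜 r y, dist γ μ ≤ ρ x y + ε) :
    (∀ r : ℝ≥0, 0 < r → ∀ x y : X, deltaR 𝒜 r x y ≤ ρ x y) ∧
    (∀ r : ℝ≥0, 0 < r → ∀ x y : X, dR 𝒜 r x y ≤ 2 * ρ x y) ∧
    entropy (fun r => dR 𝒜 r) = 0 := by
  have hnn : ∀ x y, 0 ≤ ρ x y := by
    intro x y
    have h1 := hρ.2.2 x y x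
    rw [(hρ.1 x x).2 rfl, hρ.2.1 y x] at h1
    linarith
  have hδ : ∀ r : ℝ≥0, 0 < r → ∀ x y : X, deltaR 𝒜 r x y ≤ ρ x y := by
    intro r hr x y
    refine Real.iSup_le (fun γ => ?_) (hnn x y)
    refine le_of_forall_pos_le_add (fun ε hε => ?_)
    obtain ⟨μ, hμ, h⟩ := happrox r hr x y γ γ.2 ε hε
    refine le_trans (ciInf_le ⟨0, ?_⟩ (⟨μ, hμ⟩ : curveSet 𝒜 r y)) h
    rintro _ ⟨ν, rfl⟩
    exact dist_nonneg
  have hd : ∀ r : ℝ≥0, 0 < r → ∀ x y : X, dR 𝒜 r x y ≤ 2 * ρ x y := by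
    intro r hr x y
    have h1 := hδ r hr x y
    have h2 := hδ r hr y x
    rw [hρ.2.1 y x] at h2
    unfold dR
    linarith
  refine ⟨hδ, hd, ?_⟩
  unfold entropy
  simp only [ENNReal.iSup_eq_zero]
  intro ε hε
  obtain ⟨s, hs⟩ := htb (ε / 2) (by positivity)
  have hT : Tendsto (fun r : ℝ≥0 => ENNReal.ofReal (Real.log (s.card : ℝ)) / (r : ℝ≥0∞))
      atTop (𝓝 0) := by
    have h1 : Tendsto (fun r : ℝ≥0 => (r : ℝ≥0∞)) atTop (𝓝 ⊤) :=
      ENNReal.tendsto_coe_nhds_top.2 tendsto_id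
    have h2 := ENNReal.Tendsto.const_div (a := ENNReal.ofReal (Real.log (s.card : ℝ))) h1
      (Or.inr ENNReal.ofReal_ne_top)
    simpa using h2
  refine le_antisymm ?_ bot_le
  rw [← hT.limsup_eq]
  refine Filter.limsup_le_limsup ?_
  filter_upwards [eventually_gt_atTop 0] with r hr
  refine ENNReal.div_le_div_right ?_ _
  have hle : coverNum (dR 𝒜 r) ε ≤ (s.card : ℕ∞) := by
    refine sInf_le ⟨s, rfl, fun x => ?_⟩
    obtain ⟨c, hc, h⟩ := hs x
    exact ⟨c, hc, (hd r hr c x).trans (by linarith)⟩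
  have hne : coverNum (dR 𝒜 r) ε ≠ ⊤ := ne_top_of_le_ne_top (ENat.coe_ne_top _) hle
  unfold elog
  rw [if_neg hne]
  refine ENNReal.ofReal_le_ofReal ?_
  have hn : (coverNum (dR 𝒜 r) ε).toNat ≤ s.card := ENat.toNat_le_of_le_coe hle
  rcases Nat.eq_zero_or_pos (coverNum (dR 𝒜 r) ε).toNat with h0 | h0
  · rw [h0]
    simpa using Real.log_natCast_nonneg s.card
  · exact Real.log_le_log (by exact_mod_cast h0) (by exact_mod_cast hn)
end

section
/- Let (X',d') and (X,d) be compact metric spaces, {𝒜'_r}_{r∈[0,∞)} a filtered family of admissible curves on X' and {𝒜_r}_{r∈[0,∞)} a filtered family of admissible curves on X. Let f : X' → X be a surjective map and K > 0 a constant with d(f(a),f(b)) ≤ K·d'(a,b) for all a,b ∈ X', and assume that { f∘γ' : γ' ∈ 𝒜'_r(x') } = 𝒜_r(f(x')) for every r ≥ 0 and every x' ∈ X'. Then for every r > 0 and all x',y' ∈ X': δ_r(f(x'),f(y')) ≤ K·δ'_r(x',y') and d_r(f(x'),f(y')) ≤ K·d'_r(x',y'). -/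
open Filter Topology unitInterval
open scoped ENNReal NNReal

variable {X : Type*}

/-- If `f : X' → X` is a surjective `K`-Lipschitz map sending the curve sets `𝒜'_r(x')`
onto `𝒜_r(f x')`, then `δ_r(f x', f y') ≤ K·δ'_r(x',y')` and
`d_r(f x', f y') ≤ K·d'_r(x',y')`. -/
theorem deltaR_comp_le {X' : Type*} [MetricSpace X'] [CompactSpace X']
    [MetricSpace X] [CompactSpace X]
    (𝒜' : ℝ≥0 → Set C(unitInterval, X')) (𝒜 : ℝ≥0 → Set C(unitInterval, X))
    (h𝒜' : IsAdmissibleFiltration 𝒜') (h𝒜 : IsAdmissibleFiltration 𝒜)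
    (f : X' → X) (hsurj : Function.Surjective f)
    (K : ℝ≥0) (hK : 0 < K) (hf : LipschitzWith K f)
    (himg : ∀ (r : ℝ≥0) (x' : X'),
      (fun γ' : C(unitInterval, X') =>
        (ContinuousMap.mk f hf.continuous).comp γ') '' curveSet 𝒜' r x' =
        curveSet 𝒜 r (f x')) :
    ∀ r : ℝ≥0, 0 < r → ∀ x' y' : X',
      deltaR 𝒜 r (f x') (f y') ≤ K * deltaR 𝒜' r x' y' ∧
      dR 𝒜 r (f x') (f y') ≤ K * dR 𝒜' r x' y' := by
  have key : ∀ (r : ℝ≥0) (x' y' : X'),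
      deltaR 𝒜 r (f x') (f y') ≤ K * deltaR 𝒜' r x' y' := by
    intro r x' y'
    have hne : ∀ z : X', Nonempty (curveSet 𝒜' r z) := fun z =>
      ⟨⟨ContinuousMap.const unitInterval z, h𝒜'.const_mem r z, rfl⟩⟩
    have hne2 : Nonempty (curveSet 𝒜 r (f x')) :=
      ⟨⟨ContinuousMap.const unitInterval (f x'), h𝒜.const_mem r (f x'), rfl⟩⟩
    have := hne y'
    have hbdd' : ∀ γ' : C(unitInterval, X'),
        BddBelow (Set.range fun μ : curveSet 𝒜' r y' => dist γ' (μ : C(unitInterval, X'))) :=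
      fun γ' => ⟨0, by rintro _ ⟨μ, rfl⟩; exact dist_nonneg⟩
    have hbdd : ∀ γ : C(unitInterval, X),
        BddBelow (Set.range fun μ : curveSet 𝒜 r (f y') => dist γ (μ : C(unitInterval, X))) :=
      fun γ => ⟨0, by rintro _ ⟨μ, rfl⟩; exact dist_nonneg⟩
    have hab : BddAbove (Set.range fun γ : curveSet 𝒜' r x' =>
        ⨅ μ : curveSet 𝒜' r y', dist (γ : C(unitInterval, X')) μ) := by
      refine ⟨Metric.diam (Set.univ : Set X'), ?_⟩
      rintro _ ⟨γ, rfl⟩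
      obtain ⟨μ⟩ := hne y'
      refine (ciInf_le (hbdd' γ) μ).trans ?_
      rw [ContinuousMap.dist_le Metric.diam_nonneg]
      intro t
      exact Metric.dist_le_diam_of_mem isCompact_univ.isBounded trivial trivial
    unfold deltaR
    refine ciSup_le ?_
    rintro ⟨γ, hγ⟩
    have hγ2 := hγ
    rw [← himg r x'] at hγ2
    obtain ⟨γ', hγ', rfl⟩ := hγ2
    refine le_trans ?_ (mul_le_mul_of_nonneg_left (le_ciSup hab ⟨γ', hγ'⟩) K.coe_nonneg)
    rw [Real.mul_iInf_of_nonneg K.coe_nonneg]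
    refine le_ciInf ?_
    rintro ⟨μ', hμ'⟩
    refine (ciInf_le (hbdd _) ⟨_, (himg r y').subset ⟨μ', hμ', rfl⟩⟩).trans ?_
    rw [ContinuousMap.dist_le (mul_nonneg K.coe_nonneg dist_nonneg)]
    intro t
    exact (hf.dist_le_mul _ _).trans
      (mul_le_mul_of_nonneg_left (ContinuousMap.dist_apply_le_dist t) K.coe_nonneg)
  intro r _ x' y'
  refine ⟨key r x' y', ?_⟩
  unfold dR
  rw [mul_add]
  exact add_le_add (key r x' y') (key r y' x')
end

section
/- Let (X',d') and (X,d) be compact metric spaces, {𝒜'_r}_{r∈[0,∞)} a filtered family of admissible curves on X' and {𝒜_r}_{r∈[0,∞)} a filtered family of admissible curves on X. Let f : X' → X be a surjective map and K > 0 a constant with d(f(a),f(b)) ≤ K·d'(a,b) for all a,b ∈ X', and assume that { f∘γ' : γ' ∈ 𝒜'_r(x') } = 𝒜_r(f(x')) for every r ≥ 0 and every x' ∈ X'. Then h({d'_r},X') ≥ h({d_r},X). (This is the abstract content of the theorem that for a Finsler isometric submersion f : M' → M between compact Finsler manifolds, the entropy of the lifted family of horizontal curves on M' is at least the entropy of the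 given family on M.) -/
open Filter Topology unitInterval
open scoped ENNReal NNReal

variable {X : Type*}

theorem elog_mono_aux {m n : ℕ∞} (h : m ≤ n) : elog m ≤ elog n := by
  unfold elog
  by_cases hn : n = ⊤
  · simp [hn]
  · have hm : m ≠ ⊤ := fun hm => hn (top_le_iff.mp (hm ▸ h))
    rw [if_neg hn, if_neg hm]
    apply ENNReal.ofReal_le_ofReal
    have h1 : m.toNat ≤ n.toNat := ENat.toNat_le_toNat h hn
    rcases Nat.eq_zero_or_pos m.toNat with h0 | h0
    · rw [h0]
      simpa using Real.log_natCast_nonneg n.toNat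
    · exact Real.log_le_log (by exact_mod_cast h0) (by exact_mod_cast h1)

theorem deltaR_lift_aux {X X' : Type*} [MetricSpace X'] [CompactSpace X']
    [MetricSpace X]
    (𝒜' : ℝ≥0 → Set C(unitInterval, X')) (𝒜 : ℝ≥0 → Set C(unitInterval, X))
    (h𝒜' : IsAdmissibleFiltration 𝒜')
    (f : X' → X) (K : ℝ≥0) (hf : LipschitzWith K f)
    (himg : ∀ (r : ℝ≥0) (x' : X'),
      (fun γ' : C(unitInterval, X') =>
        (ContinuousMap.mk f hf.continuous).comp γ') '' curveSet 𝒜' r x' =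
        curveSet 𝒜 r (f x')) (r : ℝ≥0) (x y : X') :
    deltaR 𝒜 r (f x) (f y) ≤ K * deltaR 𝒜' r x y := by
  have hne : ∀ z, Nonempty (curveSet 𝒜' r z) := fun z =>
    ⟨⟨ContinuousMap.const _ z, h𝒜'.const_mem r z, rfl⟩⟩
  have hbb : ∀ γ : C(unitInterval, X'),
      BddBelow (Set.range fun μ : curveSet 𝒜' r y => dist γ (μ : C(unitInterval, X'))) :=
    fun γ => ⟨0, by rintro _ ⟨μ, rfl⟩; exact dist_nonneg⟩
  have hba : BddAbove (Set.range fun γ : curveSet 𝒜' r x =>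
      ⨅ μ : curveSet 𝒜' r y, dist (γ : C(unitInterval, X')) μ) := by
    refine ⟨Metric.diam (Set.univ : Set X'), ?_⟩
    rintro _ ⟨γ, rfl⟩
    obtain ⟨μ⟩ := hne y
    refine (ciInf_le (hbb γ) μ).trans ?_
    refine (ContinuousMap.dist_le Metric.diam_nonneg).mpr fun t => ?_
    exact Metric.dist_le_diam_of_mem isCompact_univ.isBounded trivial trivial
  have hne0 : Nonempty (curveSet 𝒜 r (f x)) := by
    obtain ⟨γ, hγ⟩ := hne x
    exact ⟨⟨_, (himg r x) ▸ Set.mem_image_of_mem _ hγ⟩⟩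
  have := hne y
  unfold deltaR
  refine ciSup_le ?_
  rintro ⟨γ, hγ⟩
  rw [← himg r x] at hγ
  obtain ⟨γ', hγ', rfl⟩ := hγ
  refine le_trans ?_ (mul_le_mul_of_nonneg_left (le_ciSup hba ⟨γ', hγ'⟩) K.coe_nonneg)
  rw [Real.mul_iInf_of_nonneg K.coe_nonneg]
  refine le_ciInf ?_
  rintro ⟨μ', hμ'⟩
  have hμ := Set.mem_image_of_mem (fun γ' : C(unitInterval, X') =>
        (ContinuousMap.mk f hf.continuous).comp γ') hμ'
  rw [himg r y] at hμ
  refine (ciInf_le ⟨0, by rintro _ ⟨μ, rfl⟩; exact dist_nonneg⟩ (⟨_, hμ⟩ : curveSet 𝒜 r (f y))).trans ?_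
  refine (ContinuousMap.dist_le (mul_nonneg K.coe_nonneg dist_nonneg)).mpr fun t => ?_
  refine (hf.dist_le_mul _ _).trans ?_
  exact mul_le_mul_of_nonneg_left (ContinuousMap.dist_apply_le_dist t) K.coe_nonneg

/-- If `f : X' → X` is a surjective `K`-Lipschitz map sending the curve sets `𝒜'_r(x')`
onto `𝒜_r(f x')`, then `h({d'_r},X') ≥ h({d_r},X)`.  (Abstract form of: for a Finsler
isometric submersion between compact Finsler manifolds, the entropy of the lifted family of
horizontal curves upstairs is at least the entropy of the given family downstairs.) -/
theorem entropy_le_entropy_of_lift {X' : Type*} [MetricSpace X'] [CompactSpace X']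
    [MetricSpace X] [CompactSpace X]
    (𝒜' : ℝ≥0 → Set C(unitInterval, X')) (𝒜 : ℝ≥0 → Set C(unitInterval, X))
    (h𝒜' : IsAdmissibleFiltration 𝒜') (h𝒜 : IsAdmissibleFiltration 𝒜)
    (f : X' → X) (hsurj : Function.Surjective f)
    (K : ℝ≥0) (hK : 0 < K) (hf : LipschitzWith K f)
    (himg : ∀ (r : ℝ≥0) (x' : X'),
      (fun γ' : C(unitInterval, X') =>
        (ContinuousMap.mk f hf.continuous).comp γ') '' curveSet 𝒜' r x' =
        curveSet 𝒜 r (f x')) :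
    entropy (fun r => dR 𝒜 r) ≤ entropy (fun r => dR 𝒜' r) := by
  unfold entropy
  refine iSup₂_le fun ε hε => ?_
  have hK' : (0 : ℝ) < K := hK
  refine le_trans ?_ (le_iSup₂ (f := fun (ε : ℝ) (_ : 0 < ε) =>
    Filter.limsup (fun r : ℝ≥0 => elog (coverNum (dR 𝒜' r) ε) / (r : ℝ≥0∞)) Filter.atTop)
    (ε / K) (div_pos hε hK'))
  refine Filter.limsup_le_limsup (Filter.Eventually.of_forall fun r => ?_)
  refine ENNReal.div_le_div_right (elog_mono_aux ?_) _
  unfold coverNum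
  refine le_sInf ?_
  rintro n ⟨s, rfl, hs⟩
  classical
  have hcard : ((s.image f).card : ℕ∞) ≤ (s.card : ℕ∞) := by
    exact_mod_cast Finset.card_image_le
  refine le_trans (sInf_le ?_) hcard
  refine ⟨s.image f, rfl, fun x => ?_⟩
  obtain ⟨x', rfl⟩ := hsurj x
  obtain ⟨c, hc, hcx⟩ := hs x'
  refine ⟨f c, Finset.mem_image_of_mem f hc, ?_⟩
  have h1 := deltaR_lift_aux 𝒜' 𝒜 h𝒜' f K hf himg r c x'
  have h2 := deltaR_lift_aux 𝒜' 𝒜 h𝒜' f K hf himg r x' c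
  rw [le_div_iff₀ hK'] at hcx
  simp only [dR] at hcx ⊢
  nlinarith
end

section
/- Let (X,d) be a compact metric space such that there exist positive constants A and m with the property that for every sufficiently small ε > 0, X admits a covering by at most A·ε^{-m} closed d-balls of radius ε. Let f : X → X be a k-Lipschitz map with k ≥ 1, and for n ∈ ℕ define the Bowen metric d_n(x,y) = max_{0 ≤ i ≤ n} d(f^i(x), f^i(y)). Then {d_n}_{n∈ℕ} is an increasing family of distances on X and its entropy (the topological entropy of f) satisfies h({d_n},X) ≤ m·log k; in particular the topological entropy of f is finite. -/
open Filter Topology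
open scoped ENNReal NNReal

variable {X : Type*}

/-- entropy of an `ℕ`-indexed family of distances:
`sup_{ε>0} limsup_{n→∞} (1/n) log M(d_n,ε)`. -/
noncomputable def entropyNat (d : ℕ → X → X → ℝ) : ℝ≥0∞ :=
  ⨆ (ε : ℝ) (_ : 0 < ε),
    Filter.limsup (fun n : ℕ => elog (coverNum (d n) ε) / (n : ℝ≥0∞)) Filter.atTop

/-- an `ℕ`-indexed increasing family of distances. -/
def IsIncreasingFamilyNat (d : ℕ → X → X → ℝ) : Prop :=
  (∀ n, IsMetric (d n)) ∧ ∀ ⦃n n' : ℕ⦄, n ≤ n' → ∀ x y, d n x y ≤ d n' x y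

/-- the Bowen metric `d_n(x,y) = max_{0 ≤ i ≤ n} d(fⁱ x, fⁱ y)` of a map `f : X → X`. -/
noncomputable def bowenDist [MetricSpace X] (f : X → X) (n : ℕ) (x y : X) : ℝ :=
  (Finset.range (n + 1)).sup' (Finset.nonempty_range_iff.mpr (Nat.succ_ne_zero n))
    (fun i => dist (f^[i] x) (f^[i] y))

theorem elog_le_of_cover {Y : Type*} (ρ : Y → Y → ℝ) (ε B : ℝ) (s : Finset Y)
    (hB : (s.card : ℝ) ≤ B) (hs : ∀ x : Y, ∃ c ∈ s, ρ c x ≤ ε) :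
    elog (coverNum ρ ε) ≤ ENNReal.ofReal (Real.log B) := by
  have h : coverNum ρ ε ≤ (s.card : ℕ∞) := sInf_le ⟨s, rfl, hs⟩
  have hne : coverNum ρ ε ≠ ⊤ := ne_top_of_le_ne_top (ENat.natCast_ne_top _) h
  have h2 : (coverNum ρ ε).toNat ≤ s.card := ENat.toNat_le_of_le_natCast h
  unfold elog
  rw [if_neg hne]
  rcases Nat.eq_zero_or_pos (coverNum ρ ε).toNat with h0 | h0
  · simp [h0]
  · apply ENNReal.ofReal_le_ofReal
    apply Real.log_le_log (by exact_mod_cast h0)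
    exact le_trans (by exact_mod_cast h2) hB

theorem bowen_metric {Y : Type*} [MetricSpace Y] (f : Y → Y) :
    IsIncreasingFamilyNat (bowenDist f) := by
  have le_b : ∀ n i x y, i ∈ Finset.range (n + 1) →
      dist (f^[i] x) (f^[i] y) ≤ bowenDist f n x y := by
    intro n i x y hi
    exact Finset.le_sup' (fun i => dist (f^[i] x) (f^[i] y)) hi
  refine ⟨fun n => ⟨fun x y => ⟨fun h => ?_, ?_⟩, fun x y => ?_, fun x y z => ?_⟩, ?_⟩
  · have := le_b n 0 x y (by simp)
    rw [h] at this
    exact dist_le_zero.mp this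
  · rintro rfl
    simp [bowenDist]
  · simp only [bowenDist, dist_comm]
  · apply Finset.sup'_le
    intro i hi
    exact (dist_triangle _ (f^[i] y) _).trans (add_le_add (le_b n i x y hi) (le_b n i y z hi))
  · intro n n' h x y
    apply Finset.sup'_le
    intro i hi
    apply le_b
    simp only [Finset.mem_range] at hi ⊢
    omega

theorem entropy_bound {Y : Type*} [MetricSpace Y]
    (A m : ℝ) (hA : 0 < A)
    (hcov : ∃ ε₀ > (0 : ℝ), ∀ ε : ℝ, 0 < ε → ε < ε₀ →
      ∃ s : Finset Y, (s.card : ℝ) ≤ A * ε ^ (-m) ∧ ∀ x : Y, ∃ c ∈ s, dist c x ≤ ε)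
    (f : Y → Y) (k : ℝ≥0) (hk : 1 ≤ k) (hf : LipschitzWith k f) :
    entropyNat (bowenDist f) ≤ ENNReal.ofReal (m * Real.log k) := by
  obtain ⟨ε₀, hε₀, hcov⟩ := hcov
  have hk1 : (1 : ℝ) ≤ k := by exact_mod_cast hk
  have hk0 : (0 : ℝ) < k := by linarith
  refine iSup₂_le fun ε hε => ?_
  obtain ⟨δ, hδ, hδε, hδε₀⟩ : ∃ δ : ℝ, 0 < δ ∧ δ ≤ ε ∧ δ < ε₀ :=
    ⟨min ε (ε₀ / 2), lt_min hε (by linarith), min_le_left _ _,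
      (min_le_right _ _).trans_lt (by linarith)⟩
  set C : ℝ := Real.log A - m * Real.log δ with hC
  have key : ∀ n : ℕ, elog (coverNum (bowenDist f n) ε) ≤
      ENNReal.ofReal (C + n * (m * Real.log k)) := by
    intro n
    have hkn : (1 : ℝ) ≤ (k : ℝ) ^ n := one_le_pow₀ hk1
    have hr : 0 < δ / (k : ℝ) ^ n := by positivity
    obtain ⟨s, hs, hsc⟩ := hcov (δ / (k : ℝ) ^ n) hr ((div_le_self hδ.le hkn).trans_lt hδε₀)
    have := elog_le_of_cover (bowenDist f n) ε _ s hs (fun x => by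
      obtain ⟨c, hc, hcx⟩ := hsc x
      refine ⟨c, hc, Finset.sup'_le _ _ fun i hi => ?_⟩
      have h1 := (hf.iterate i).dist_le_mul c x
      have hi' : i ≤ n := by simp at hi; omega
      calc dist (f^[i] c) (f^[i] x) ≤ (k : ℝ) ^ i * dist c x := by simpa using h1
        _ ≤ (k : ℝ) ^ n * (δ / (k : ℝ) ^ n) := by gcongr
        _ = δ := by field_simp
        _ ≤ ε := hδε)
    refine this.trans (le_of_eq ?_)
    congr 1
    rw [Real.log_mul hA.ne' (by positivity), Real.log_rpow hr,
      Real.log_div hδ.ne' (by positivity), Real.log_pow, hC]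
    ring
  have hle : ∀ᶠ n : ℕ in atTop, elog (coverNum (bowenDist f n) ε) / (n : ℝ≥0∞) ≤
      ENNReal.ofReal (C / n + m * Real.log k) := by
    filter_upwards [eventually_gt_atTop 0] with n hn
    have hn' : (0 : ℝ) < n := by exact_mod_cast hn
    calc _ ≤ ENNReal.ofReal (C + n * (m * Real.log k)) / (n : ℝ≥0∞) :=
          ENNReal.div_le_div_right (key n) _
      _ = _ := by
        rw [← ENNReal.ofReal_natCast, ← ENNReal.ofReal_div_of_pos hn']
        congr 1
        field_simp
  have ht : Tendsto (fun n : ℕ => ENNReal.ofReal (C / n + m * Real.log k)) atTop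
      (𝓝 (ENNReal.ofReal (m * Real.log k))) := by
    apply ENNReal.tendsto_ofReal
    simpa using (tendsto_const_div_atTop_nhds_zero_nat C).add_const (m * Real.log k)
  exact (limsup_le_limsup hle).trans ht.limsup_eq.le

/-- For a `k`-Lipschitz map `f` (`k ≥ 1`) on a compact metric space admitting coverings by
at most `A·ε^{-m}` balls of radius `ε`, the Bowen metrics form an increasing family of
distances whose entropy (the topological entropy of `f`) is at most `m·log k`; in
particular it is finite. -/
theorem topologicalEntropy_le_of_lipschitz [MetricSpace X] [CompactSpace X]
    (A m : ℝ) (hA : 0 < A) (hm : 0 < m)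
    (hcov : ∃ ε₀ > (0 : ℝ), ∀ ε : ℝ, 0 < ε → ε < ε₀ →
      ∃ s : Finset X, (s.card : ℝ) ≤ A * ε ^ (-m) ∧ ∀ x : X, ∃ c ∈ s, dist c x ≤ ε)
    (f : X → X) (k : ℝ≥0) (hk : 1 ≤ k) (hf : LipschitzWith k f) :
    IsIncreasingFamilyNat (bowenDist f) ∧
    (∀ x y, bowenDist f 0 x y = dist x y) ∧
    entropyNat (bowenDist f) ≤ ENNReal.ofReal (m * Real.log k) ∧
    entropyNat (bowenDist f) < ⊤ := by
  have h := entropy_bound A m hA hcov f k hk hf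
  exact ⟨bowen_metric f, fun x y => by simp [bowenDist], h, h.trans_lt ENNReal.ofReal_lt_top⟩
end
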